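/- Let M be an R-module admitting a short exact sequence 0 → G₁ → G₀ → M → 0 with G₀, G₁ Gorenstein (L,A)-projective, and suppose Ext¹_R(M, L) = 0 for every L ∈ 𝓛. Then M is Gorenstein (L,A)-projective. -/

import Mathlib

/-!
Write `𝒢` for the class of modules `X` with `Extⁱ(X, 𝓛) = 0` for all `i ≥ 1` that embed in a
projective with cokernel again in `𝒢` (the predicate `Cores 𝓛`). A module is Gorenstein
`(𝓛, 𝓐)`-projective iff it is in `𝒢`: the kernels in a totally acyclic complex are in `𝒢`
(`Cores.of_isGProj`), and conversely a coresolution inside `𝒢` can be spliced with any projective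
resolution, whose syzygies stay in `𝒢` (`Cores.isGProj`). Projective modules belong to `𝓛`, so the
horseshoe construction shows that `𝒢` is closed under extensions (`Cores.of_ses`).

Let `0 → G₁ → G₀ → M → 0` be as in the theorem. The long exact sequence gives `Extⁱ(M, 𝓛) = 0` for
`i ≥ 2`, and for `i = 1` this is assumed. Choose `0 → G₁ → P → G' → 0` with `P` projective and `G'`
in `𝒢`. As `Ext¹(M, P) = 0`, the map `G₁ → P` extends to `e : G₀ → P`, and `(e, g)` is the first map
of a short exact sequence `0 → G₀ → P × M → G' → 0`. So `P × M` is in `𝒢`. Embed `P × M` in a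
projective `P₀` with cokernel `Q` in `𝒢`; then `P₀ / M` is an extension of `Q` by `P`, hence in `𝒢`,
and therefore so is `M` (`Cores.of_prod`, `Cores.of_coker`).
-/

open CategoryTheory CategoryTheory.Limits DirectSum

namespace DualityPaper

variable {R : Type} [Ring R]

/-- The right `R`-module structure on the group of additive maps out of a left `R`-module,
given by `(f • r) m = f (r • m)`. -/
instance charModuleRight (M A : Type) [AddCommGroup M] [AddCommGroup A] [Module R M] :
    Module Rᵐᵒᵖ (M →+ A) where
  smul r f := f.comp (DistribMulAction.toAddMonoidHom M r.unop)
  one_smul f := AddMonoidHom.ext fun m => by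
    show f ((1 : Rᵐᵒᵖ).unop • m) = f m
    simp
  mul_smul r s f := AddMonoidHom.ext fun m => by
    show f ((r * s).unop • m) = f (s.unop • r.unop • m)
    rw [MulOpposite.unop_mul, mul_smul]
  smul_zero r := rfl
  smul_add r f g := rfl
  add_smul r s f := AddMonoidHom.ext fun m => by
    show f ((r + s).unop • m) = f (r.unop • m) + f (s.unop • m)
    rw [MulOpposite.unop_add, add_smul, map_add]
  zero_smul f := AddMonoidHom.ext fun m => by
    show f ((0 : Rᵐᵒᵖ).unop • m) = 0
    simp

/-- The left `R`-module structure on the group of additive maps out of a right `R`-module. -/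
instance charModuleLeft (N A : Type) [AddCommGroup N] [AddCommGroup A] [Module Rᵐᵒᵖ N] :
    Module R (N →+ A) where
  smul r f := f.comp (DistribMulAction.toAddMonoidHom N (MulOpposite.op r))
  one_smul f := AddMonoidHom.ext fun m => by
    show f ((MulOpposite.op (1 : R)) • m) = f m
    simp
  mul_smul r s f := AddMonoidHom.ext fun m => by
    show f (MulOpposite.op (r * s) • m) = f (MulOpposite.op s • MulOpposite.op r • m)
    rw [MulOpposite.op_mul, mul_smul]
  smul_zero r := rfl
  smul_add r f g := rfl
  add_smul r s f := AddMonoidHom.ext fun m => by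
    show f (MulOpposite.op (r + s) • m) = f (MulOpposite.op r • m) + f (MulOpposite.op s • m)
    rw [MulOpposite.op_add, add_smul, map_add]
  zero_smul f := AddMonoidHom.ext fun m => by
    show f (MulOpposite.op (0 : R) • m) = 0
    simp

/-- The character module `M⁺ = Hom_ℤ(M, ℚ/ℤ)` of a left module, as a right module. -/
def charL (M : ModuleCat.{0} R) : ModuleCat.{0} Rᵐᵒᵖ :=
  ModuleCat.of Rᵐᵒᵖ (M →+ AddCircle (1 : ℚ))

/-- The character module `N⁺ = Hom_ℤ(N, ℚ/ℤ)` of a right module, as a left module. -/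
def charR (N : ModuleCat.{0} Rᵐᵒᵖ) : ModuleCat.{0} R :=
  ModuleCat.of R (N →+ AddCircle (1 : ℚ))

/-- A left module over a (possibly noncommutative) ring is flat iff its character module is an
injective right module (Lambek); we take this as the definition of flatness. -/
def IsFlatMod (M : ModuleCat.{0} R) : Prop := CategoryTheory.Injective (charL M)

/-- `f`, `g` form a short exact sequence `0 → A → B → C → 0`. -/
def SES {A B C : ModuleCat.{0} R} (f : A ⟶ B) (g : B ⟶ C) : Prop :=
  ∃ w : f ≫ g = 0, (ShortComplex.mk f g w).ShortExact

/-- Vanishing of `Ext^n_R(M, N)`. -/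
def ExtVanish (n : ℕ) (M N : ModuleCat.{0} R) : Prop :=
  Subsingleton (((_root_.Ext ℤ (ModuleCat.{0} R) n).obj (Opposite.op M)).obj N)

/-- A complete duality pair `(𝓛, 𝓐)` over `R`. -/
structure CompleteDualityPair (𝓛 : Set (ModuleCat.{0} R)) (𝓐 : Set (ModuleCat.{0} Rᵐᵒᵖ)) :
    Prop where
  isoClosed_L : ∀ {M N : ModuleCat.{0} R}, (M ≅ N) → M ∈ 𝓛 → N ∈ 𝓛
  isoClosed_A : ∀ {M N : ModuleCat.{0} Rᵐᵒᵖ}, (M ≅ N) → M ∈ 𝓐 → N ∈ 𝓐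
  char_mem_iff : ∀ M : ModuleCat.{0} R, M ∈ 𝓛 ↔ charL M ∈ 𝓐
  char_mem_iff' : ∀ N : ModuleCat.{0} Rᵐᵒᵖ, N ∈ 𝓐 ↔ charR N ∈ 𝓛
  summands_A : ∀ A ∈ 𝓐, ∀ (B : ModuleCat.{0} Rᵐᵒᵖ) (i : B ⟶ A) (p : A ⟶ B),
    i ≫ p = 𝟙 B → B ∈ 𝓐
  sums_A : ∀ A B : ModuleCat.{0} Rᵐᵒᵖ, A ∈ 𝓐 → B ∈ 𝓐 → ModuleCat.of Rᵐᵒᵖ (A × B) ∈ 𝓐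
  summands_L : ∀ L ∈ 𝓛, ∀ (K : ModuleCat.{0} R) (i : K ⟶ L) (p : L ⟶ K),
    i ≫ p = 𝟙 K → K ∈ 𝓛
  sums_L : ∀ L K : ModuleCat.{0} R, L ∈ 𝓛 → K ∈ 𝓛 → ModuleCat.of R (L × K) ∈ 𝓛
  self_mem : ModuleCat.of R R ∈ 𝓛
  coprod_L : ∀ (ι : Type) (f : ι → ModuleCat.{0} R), (∀ i, f i ∈ 𝓛) →
    ModuleCat.of R (⨁ i, f i) ∈ 𝓛
  ext_L : ∀ {A B C : ModuleCat.{0} R} (f : A ⟶ B) (g : B ⟶ C),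
    SES f g → A ∈ 𝓛 → C ∈ 𝓛 → B ∈ 𝓛

/-- A doubly infinite exact sequence of projectives which stays exact after applying
`Hom_R(-, T)` for every `T` in the class `𝓣`. -/
structure IsTotallyAcyclicWrt (𝓣 : Set (ModuleCat.{0} R))
    (C : ChainComplex (ModuleCat.{0} R) ℤ) : Prop where
  projective : ∀ n, Projective (C.X n)
  exact : ∀ n, (C.sc n).Exact
  homExact : ∀ T ∈ 𝓣, ∀ (n : ℤ) (g : C.X n ⟶ T), C.d (n + 1) n ≫ g = 0 →
    ∃ h : C.X (n - 1) ⟶ T, C.d n (n - 1) ≫ h = g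

/-- `M` is Gorenstein projective relative to the class `𝓣`:  it is a kernel in a
`Hom_R(-, 𝓣)`-exact exact sequence of projective modules. -/
def IsGProj (𝓣 : Set (ModuleCat.{0} R)) (M : ModuleCat.{0} R) : Prop :=
  ∃ C : ChainComplex (ModuleCat.{0} R) ℤ, IsTotallyAcyclicWrt 𝓣 C ∧
    ∃ n : ℤ, Nonempty (M ≅ kernel (C.d n (n - 1)))

/-- `M` is strongly Gorenstein `(𝓛,𝓐)`-projective. -/
def IsSGProj (𝓣 : Set (ModuleCat.{0} R)) (M : ModuleCat.{0} R) : Prop :=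
  ∃ (P : ModuleCat.{0} R) (f : P ⟶ P), Projective P ∧
    (∃ w : f ≫ f = 0, (ShortComplex.mk f f w).Exact) ∧
    (∀ T ∈ 𝓣, ∀ g : P ⟶ T, f ≫ g = 0 → ∃ h : P ⟶ T, f ≫ h = g) ∧
    Nonempty (M ≅ kernel f)

/-- Resolution dimension of `M` with respect to a class `𝓒` is at most `n`. -/
def ResDimLE (𝓒 : Set (ModuleCat.{0} R)) : ℕ → ModuleCat.{0} R → Prop
  | 0, M => M ∈ 𝓒
  | n + 1, M => ∃ (K C : ModuleCat.{0} R) (f : K ⟶ C) (g : C ⟶ M),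
      C ∈ 𝓒 ∧ SES f g ∧ ResDimLE 𝓒 n K

/-- `K` is an `n`-th kernel of an exact sequence `0 → K → C_{n-1} → ⋯ → C₀ → M → 0`
with all `Cᵢ` in `𝓒`. -/
def IsNthSyzygy (𝓒 : Set (ModuleCat.{0} R)) : ℕ → ModuleCat.{0} R → ModuleCat.{0} R → Prop
  | 0, M, K => Nonempty (K ≅ M)
  | n + 1, M, K => ∃ (S C : ModuleCat.{0} R) (f : S ⟶ C) (g : C ⟶ M),
      C ∈ 𝓒 ∧ SES f g ∧ IsNthSyzygy 𝓒 n S K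

/-- A left Frobenius pair `(𝓧, ω)`. -/
structure LeftFrobeniusPair (𝓧 ω : Set (ModuleCat.{0} R)) : Prop where
  summands_X : ∀ X ∈ 𝓧, ∀ (Y : ModuleCat.{0} R) (i : Y ⟶ X) (p : X ⟶ Y),
    i ≫ p = 𝟙 Y → Y ∈ 𝓧
  extensions_X : ∀ {A B C : ModuleCat.{0} R} (f : A ⟶ B) (g : B ⟶ C),
    SES f g → A ∈ 𝓧 → C ∈ 𝓧 → B ∈ 𝓧
  kerEpi_X : ∀ {A B C : ModuleCat.{0} R} (f : A ⟶ B) (g : B ⟶ C),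
    SES f g → B ∈ 𝓧 → C ∈ 𝓧 → A ∈ 𝓧
  subset : ω ⊆ 𝓧
  inj : ∀ X ∈ 𝓧, ∀ W ∈ ω, ∀ i : ℕ, 1 ≤ i → ExtVanish i X W
  cogen : ∀ X ∈ 𝓧, ∃ (W X' : ModuleCat.{0} R) (f : X ⟶ W) (g : W ⟶ X'),
    W ∈ ω ∧ X' ∈ 𝓧 ∧ SES f g
  summands_ω : ∀ W ∈ ω, ∀ (V : ModuleCat.{0} R) (i : V ⟶ W) (p : W ⟶ V),
    i ≫ p = 𝟙 V → V ∈ ω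

/-! ### Short exact sequences and vanishing of Ext -/

/-- `SES` in terms of the underlying functions, the form used in the element chases. -/
lemma ses_iff {A B C : ModuleCat.{0} R} {f : A ⟶ B} {g : B ⟶ C} :
    SES f g ↔ Function.Injective f ∧ Function.Exact f g ∧ Function.Surjective g := by
  constructor
  · rintro ⟨w, h⟩
    refine ⟨(ModuleCat.mono_iff_injective _).1 h.mono_f,
      (ShortComplex.ShortExact.moduleCat_exact_iff_function_exact _).1 h.exact,
      (ModuleCat.epi_iff_surjective _).1 h.epi_g⟩
  · rintro ⟨hi, he, hs⟩
    have w : f ≫ g = 0 := by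
      ext x
      exact (he _).2 ⟨x, rfl⟩
    exact ⟨w, { exact := (ShortComplex.ShortExact.moduleCat_exact_iff_function_exact _).2 he
                mono_f := (ModuleCat.mono_iff_injective _).2 hi
                epi_g := (ModuleCat.epi_iff_surjective _).2 hs }⟩

section ExtLemmas

variable {A B C T : ModuleCat.{0} R} {f : A ⟶ B} {g : B ⟶ C}

lemma SES.ext_mid (h : SES f g) {n : ℕ} (hA : Subsingleton (Abelian.Ext A T n))
    (hC : Subsingleton (Abelian.Ext C T n)) : Subsingleton (Abelian.Ext B T n) := by
  obtain ⟨w, hS⟩ := h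
  refine subsingleton_of_forall_eq 0 fun x => ?_
  obtain ⟨y, rfl⟩ := Abelian.Ext.contravariant_sequence_exact₂ hS T x
    (Subsingleton.elim (α := Abelian.Ext A T n) _ _)
  rw [Subsingleton.elim (α := Abelian.Ext C T n) y 0]
  simp

lemma SES.ext_left (h : SES f g) {n : ℕ} (hB : Subsingleton (Abelian.Ext B T n))
    (hC : Subsingleton (Abelian.Ext C T (n + 1))) : Subsingleton (Abelian.Ext A T n) := by
  obtain ⟨w, hS⟩ := h
  refine subsingleton_of_forall_eq 0 fun x => ?_
  obtain ⟨y, rfl⟩ := Abelian.Ext.contravariant_sequence_exact₁ hS T x (add_comm 1 n)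
    (Subsingleton.elim (α := Abelian.Ext C T (n + 1)) _ _)
  rw [Subsingleton.elim (α := Abelian.Ext B T n) y 0]
  simp

lemma SES.ext_right (h : SES f g) {n : ℕ} (hA : Subsingleton (Abelian.Ext A T n))
    (hB : Subsingleton (Abelian.Ext B T (n + 1))) : Subsingleton (Abelian.Ext C T (n + 1)) := by
  obtain ⟨w, hS⟩ := h
  refine subsingleton_of_forall_eq 0 fun x => ?_
  obtain ⟨y, rfl⟩ := Abelian.Ext.contravariant_sequence_exact₃ hS T x
    (Subsingleton.elim (α := Abelian.Ext B T (n + 1)) _ _) (add_comm 1 n)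
  rw [Subsingleton.elim (α := Abelian.Ext A T n) y 0]
  simp

/-- If `Ext¹(C, T) = 0`, every map `A ⟶ T` extends along `f : A ⟶ B`. -/
lemma SES.extend (h : SES f g) (hC : Subsingleton (Abelian.Ext C T 1)) (a : A ⟶ T) :
    ∃ b : B ⟶ T, f ≫ b = a := by
  obtain ⟨w, hS⟩ := h
  obtain ⟨y, hy⟩ := Abelian.Ext.contravariant_sequence_exact₁ hS T (Abelian.Ext.mk₀ a) (add_zero 1)
    (Subsingleton.elim (α := Abelian.Ext C T 1) _ _)
  obtain ⟨b, rfl⟩ := Abelian.Ext.mk₀_bijective _ _ |>.2 y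
  refine ⟨b, (Abelian.Ext.mk₀_bijective _ _).1 ?_⟩
  rw [← hy, Abelian.Ext.mk₀_comp_mk₀]

/-- Converse of `SES.extend`, provided `Ext¹(B, T) = 0`. -/
lemma SES.ext_one_of_extend (h : SES f g) (hB : Subsingleton (Abelian.Ext B T 1))
    (H : ∀ a : A ⟶ T, ∃ b : B ⟶ T, f ≫ b = a) : Subsingleton (Abelian.Ext C T 1) := by
  obtain ⟨w, hS⟩ := h
  refine subsingleton_of_forall_eq 0 fun x => ?_
  obtain ⟨y, rfl⟩ := Abelian.Ext.contravariant_sequence_exact₃ hS T x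
    (Subsingleton.elim (α := Abelian.Ext B T 1) _ _) (add_zero 1)
  obtain ⟨a, rfl⟩ := Abelian.Ext.mk₀_bijective _ _ |>.2 y
  obtain ⟨b, rfl⟩ := H a
  rw [← Abelian.Ext.mk₀_comp_mk₀, ← Abelian.Ext.comp_assoc_of_second_deg_zero]
  rw [hS.extClass_comp]
  simp

end ExtLemmas

/-- `ExtVanish` speaks of `Ext` as a derived functor of `Hom`, whereas the long exact sequences are
available for `Abelian.Ext`. In degree one the two are compared through lifting: exactness of
`Hom(P₀, T) → Hom(P₁, T) → Hom(P₂, T)` for a projective resolution `P` of `M` says that every map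
from the first syzygy of `M` to `T` extends to `P₀`. -/
lemma ExtVanish.subsingleton_ext {M T : ModuleCat.{0} R} (h : ExtVanish 1 M T) :
    Subsingleton (Abelian.Ext M T 1) := by
  let P := ProjectiveResolution.of M
  have hz : IsZero ((P.complex.linearYonedaObj ℤ T).homology 1) := by
    have : IsZero (((_root_.Ext ℤ (ModuleCat.{0} R) 1).obj (Opposite.op M)).obj T) :=
      @ModuleCat.isZero_of_subsingleton _ _ _ h
    exact this.of_iso (P.isoExt (R := ℤ) 1 T).symm
  rw [← HomologicalComplex.exactAt_iff_isZero_homology,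
    HomologicalComplex.exactAt_iff' _ 0 1 2 (by simp) (by simp),
    ShortComplex.moduleCat_exact_iff] at hz
  let p : P.complex.X 0 ⟶ M := P.π.f 0
  have hw : P.complex.d 1 0 ≫ p = 0 := P.complex_d_comp_π_f_zero
  have hex : (ShortComplex.mk _ _ hw).Exact :=
    ShortComplex.exact_of_g_is_cokernel _ P.isColimitCokernelCofork
  have hp : Epi p := inferInstanceAs (Epi (P.π.f 0))
  have hses : SES (kernel.ι p) p :=
    ⟨kernel.condition _, { exact := ShortComplex.exact_kernel _ }⟩
  have hl : Epi (kernel.lift p (P.complex.d 1 0) hw) := hex.epi_kernelLift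
  refine hses.ext_one_of_extend (Abelian.Ext.subsingleton_of_projective _ _ 0) fun a => ?_
  have hx : P.complex.d 2 1 ≫ kernel.lift p (P.complex.d 1 0) hw ≫ a = 0 := by
    have : P.complex.d 2 1 ≫ kernel.lift p (P.complex.d 1 0) hw = 0 := by
      rw [← cancel_mono (kernel.ι p)]
      simp
    rw [← Category.assoc, this, zero_comp]
  obtain ⟨(b : P.complex.X 0 ⟶ T), hb⟩ := hz (kernel.lift p (P.complex.d 1 0) hw ≫ a) hx
  refine ⟨b, ?_⟩
  rw [← cancel_epi (kernel.lift p (P.complex.d 1 0) hw), ← hb]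
  exact kernel.lift_ι_assoc _ _ _ _

/-- A projective module is a direct summand of a free module, hence lies in `𝓛`. -/
lemma CompleteDualityPair.mem_of_projective {𝓛 : Set (ModuleCat.{0} R)}
    {𝓐 : Set (ModuleCat.{0} Rᵐᵒᵖ)} (hdp : CompleteDualityPair 𝓛 𝓐) (P : ModuleCat.{0} R)
    [Projective P] : P ∈ 𝓛 := by
  classical
  let F : ModuleCat.{0} R := ModuleCat.of R (⨁ _ : P, (ModuleCat.of R R : ModuleCat.{0} R))
  have hF : F ∈ 𝓛 := hdp.coprod_L P (fun _ => ModuleCat.of R R) fun _ => hdp.self_mem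
  let π : F ⟶ P := ModuleCat.ofHom
    (DirectSum.toModule R P P fun m => LinearMap.toSpanSingleton R P m)
  have : Epi π := by
    rw [ModuleCat.epi_iff_surjective]
    intro m
    refine ⟨DirectSum.lof R P (fun _ => R) m 1, ?_⟩
    exact (DirectSum.toModule_lof (M := fun _ : P => R)
      (φ := fun m => LinearMap.toSpanSingleton R P m) R m (1 : R)).trans (one_smul R m)
  exact hdp.summands_L F hF P (Projective.factorThru (𝟙 P) π) π (Projective.factorThru_comp _ _)

/-! ### Modules with a relative projective coresolution -/

/-- The left orthogonal class of `𝓣`: all higher `Ext` groups into members of `𝓣` vanish. -/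
def Perp (𝓣 : Set (ModuleCat.{0} R)) (X : ModuleCat.{0} R) : Prop :=
  ∀ T ∈ 𝓣, ∀ n : ℕ, Subsingleton (Abelian.Ext X T (n + 1))

/-- There is a short exact sequence `0 → X → P → Y → 0` with `P` projective. -/
def Step (X Y : ModuleCat.{0} R) : Prop :=
  ∃ (P : ModuleCat.{0} R) (i : X ⟶ P) (p : P ⟶ Y), Projective P ∧ SES i p

/-- Membership in the largest subclass of `Perp 𝓣` each of whose members embeds in a projective
with cokernel again in the subclass. Since the cokernels lie in `Perp 𝓣`, the resulting
coresolution by projectives is automatically `Hom(-, 𝓣)`-exact. -/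
def Cores (𝓣 : Set (ModuleCat.{0} R)) (M : ModuleCat.{0} R) : Prop :=
  ∃ 𝒮 : Set (ModuleCat.{0} R), M ∈ 𝒮 ∧ ∀ X ∈ 𝒮, Perp 𝓣 X ∧ ∃ Y ∈ 𝒮, Step X Y

section Closure

variable {𝓣 : Set (ModuleCat.{0} R)} {A B C M X Y : ModuleCat.{0} R}

lemma Perp.of_projective [Projective X] : Perp 𝓣 X := fun T _ n =>
  Abelian.Ext.subsingleton_of_projective X T n

lemma Cores.perp (h : Cores 𝓣 X) : Perp 𝓣 X := by
  obtain ⟨𝒮, hX, h𝒮⟩ := h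
  exact (h𝒮 X hX).1

lemma Cores.exists_step (h : Cores 𝓣 X) : ∃ Y, Cores 𝓣 Y ∧ Step X Y := by
  obtain ⟨𝒮, hX, h𝒮⟩ := h
  obtain ⟨Y, hY, h⟩ := (h𝒮 X hX).2
  exact ⟨Y, ⟨𝒮, hY, h𝒮⟩, h⟩

lemma Cores.of_step (hX : Perp 𝓣 X) (hY : Cores 𝓣 Y) (h : Step X Y) : Cores 𝓣 X := by
  refine ⟨insert X {Z | Cores 𝓣 Z}, Set.mem_insert _ _, ?_⟩
  rintro Z (rfl | hZ)
  · exact ⟨hX, Y, Or.inr hY, h⟩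
  · obtain ⟨W, hW, hs⟩ := hZ.exists_step
    exact ⟨hZ.perp, W, Or.inr hW, hs⟩

lemma Cores.of_projective (P : ModuleCat.{0} R) [Projective P] : Cores 𝓣 P := by
  refine ⟨{X | Projective X}, ‹_›, fun X (hX : Projective X) => ⟨Perp.of_projective, ?_⟩⟩
  refine ⟨ModuleCat.of R PUnit, ?_, X, 𝟙 X, 0, hX, ?_⟩
  · exact (ModuleCat.isZero_of_subsingleton _).projective
  · rw [ses_iff]
    exact ⟨fun x y h => h, fun x => ⟨fun _ => ⟨x, rfl⟩, fun _ => rfl⟩, fun y => ⟨0, rfl⟩⟩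

/-- Every `X` in the class is also the quotient of a projective by a member of the class: the
kernel of any epimorphism from a projective onto `X` will do. -/
lemma Cores.exists_step_left (h : Cores 𝓣 X) : ∃ W, Cores 𝓣 W ∧ Step W X := by
  have hses : SES (kernel.ι (Projective.π X)) (Projective.π X) :=
    ⟨kernel.condition _, { exact := ShortComplex.exact_kernel _ }⟩
  have hs : Step (kernel (Projective.π X)) X := ⟨_, _, _, inferInstance, hses⟩
  refine ⟨_, Cores.of_step (fun T hT n => ?_) h hs, hs⟩
  exact hses.ext_left (Perp.of_projective T hT n) (h.perp T hT (n + 1))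

/-- The horseshoe construction for coresolutions: given embeddings of the two ends `A` and `C` with
cokernels `A'` and `C'`, an extension `e` of `A ⟶ PA` to `B` yields an embedding of `B` into
`PA × PC` whose cokernel is an extension of `C'` by `A'`. -/
lemma horseshoe {A' C' PA PC : ModuleCat.{0} R} {f : A ⟶ B} {g : B ⟶ C} (h : SES f g)
    {i : A ⟶ PA} {p : PA ⟶ A'} (hA : SES i p) {j : C ⟶ PC} {q : PC ⟶ C'} (hC : SES j q)
    (e : B ⟶ PA) (he : f ≫ e = i) :
    ∃ (B' : ModuleCat.{0} R) (k : B ⟶ ModuleCat.of R (PA × PC))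
      (r : ModuleCat.of R (PA × PC) ⟶ B') (f' : A' ⟶ B') (g' : B' ⟶ C'),
      SES k r ∧ SES f' g' := by
  obtain ⟨f0, fg, g1⟩ := ses_iff.1 h
  obtain ⟨i0, ip, p1⟩ := ses_iff.1 hA
  obtain ⟨j0, jq, q1⟩ := ses_iff.1 hC
  have he' : ∀ x, e (f x) = i x := fun x => by rw [← he]; rfl
  let k : B →ₗ[R] PA × PC := e.hom.prod (j.hom ∘ₗ g.hom)
  let α : PA →ₗ[R] (PA × PC) ⧸ LinearMap.range k :=
    (LinearMap.range k).mkQ ∘ₗ LinearMap.inl R PA PC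
  have hα : ∀ x, α x = 0 ↔ p x = 0 := by
    intro x
    rw [ip x]
    change Submodule.Quotient.mk (x, 0) = _ ↔ _
    rw [Submodule.Quotient.mk_eq_zero]
    constructor
    · rintro ⟨b, hb⟩
      obtain ⟨hb1, hb2⟩ := Prod.ext_iff.1 hb
      change e b = x at hb1
      change j (g b) = 0 at hb2
      have : g b = 0 := j0 (hb2.trans (map_zero j.hom).symm)
      obtain ⟨a, rfl⟩ := (fg b).1 this
      exact ⟨a, by rw [← hb1, he']⟩
    · rintro ⟨a, rfl⟩
      refine ⟨f a, Prod.ext (he' a) ?_⟩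
      change j (g (f a)) = 0
      rw [(fg _).2 ⟨a, rfl⟩]
      exact map_zero j.hom
  let eA := p.hom.quotKerEquivOfSurjective p1
  let f' : A' →ₗ[R] (PA × PC) ⧸ LinearMap.range k :=
    (LinearMap.ker p.hom).liftQ α (fun x hx => (hα x).2 hx) ∘ₗ eA.symm.toLinearMap
  have hf' : ∀ x, f' (p x) = α x := by
    intro x
    have : eA.symm (p x) = Submodule.Quotient.mk x := by
      rw [LinearEquiv.symm_apply_eq]; rfl
    change (LinearMap.ker p.hom).liftQ α (fun x hx => (hα x).2 hx) (eA.symm (p x)) = _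
    rw [this]
    rfl
  let g' : ((PA × PC) ⧸ LinearMap.range k) →ₗ[R] C' :=
    (LinearMap.range k).liftQ (q.hom ∘ₗ LinearMap.snd R PA PC) (by
      rintro _ ⟨b, rfl⟩
      exact (jq _).2 ⟨g b, rfl⟩)
  refine ⟨ModuleCat.of R ((PA × PC) ⧸ LinearMap.range k), ModuleCat.ofHom k,
    ModuleCat.ofHom (LinearMap.range k).mkQ, ModuleCat.ofHom f', ModuleCat.ofHom g', ?_, ?_⟩
  · refine ses_iff.2 ⟨?_, ?_, Submodule.mkQ_surjective _⟩
    · refine (injective_iff_map_eq_zero k).2 fun b hb => ?_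
      obtain ⟨hb1, hb2⟩ := Prod.ext_iff.1 hb
      change e b = 0 at hb1
      change j (g b) = 0 at hb2
      have : g b = 0 := j0 (hb2.trans (map_zero j.hom).symm)
      obtain ⟨a, rfl⟩ := (fg b).1 this
      rw [he'] at hb1
      have : a = 0 := i0 (hb1.trans (map_zero i.hom).symm)
      rw [this]
      exact map_zero f.hom
    · intro y
      exact Submodule.Quotient.mk_eq_zero _
  · refine ses_iff.2 ⟨?_, ?_, ?_⟩
    · refine (injective_iff_map_eq_zero f').2 fun a ha => ?_
      obtain ⟨x, rfl⟩ := p1 a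
      rw [hf'] at ha
      exact (hα x).1 ha
    · intro y
      obtain ⟨⟨u, v⟩, rfl⟩ := Submodule.mkQ_surjective _ y
      constructor
      · intro hy
        obtain ⟨c, rfl⟩ := (jq v).1 hy
        obtain ⟨b, rfl⟩ := g1 c
        refine ⟨p (u - e b), (hf' _).trans ?_⟩
        change Submodule.Quotient.mk _ = Submodule.Quotient.mk _
        rw [Submodule.Quotient.eq]
        refine ⟨-b, Prod.ext ?_ ?_⟩
        · change e.hom (-b) = (u - e b) - u
          rw [map_neg]
          exact (sub_sub_cancel_left u (e b)).symm
        · change j.hom (g.hom (-b)) = 0 - j (g b)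
          rw [map_neg, map_neg, zero_sub]
      · rintro ⟨a, ha⟩
        obtain ⟨x, rfl⟩ := p1 a
        rw [← ha]
        change g' (f' (p x)) = 0
        rw [hf']
        exact map_zero q.hom
    · intro y
      obtain ⟨v, rfl⟩ := q1 y
      exact ⟨Submodule.Quotient.mk (0, v), rfl⟩

lemma projective_prod (P Q : ModuleCat.{0} R) [hP : Projective P] [hQ : Projective Q] :
    Projective (ModuleCat.of R (P × Q)) := by
  rw [← IsProjective.iff_projective] at *
  infer_instance

/-- The class is closed under extensions. -/
lemma Cores.of_ses (h𝓣 : ∀ P : ModuleCat.{0} R, Projective P → P ∈ 𝓣) {f : A ⟶ B} {g : B ⟶ C}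
    (h : SES f g) (hA : Cores 𝓣 A) (hC : Cores 𝓣 C) : Cores 𝓣 B := by
  refine ⟨{X | ∃ (A C : ModuleCat.{0} R) (f : A ⟶ X) (g : X ⟶ C),
    SES f g ∧ Cores 𝓣 A ∧ Cores 𝓣 C}, ⟨A, C, f, g, h, hA, hC⟩, ?_⟩
  rintro X ⟨A, C, f, g, h, hA, hC⟩
  refine ⟨fun T hT n => h.ext_mid (hA.perp T hT n) (hC.perp T hT n), ?_⟩
  obtain ⟨A', hA', PA, i, p, hPA, hsA⟩ := hA.exists_step
  obtain ⟨C', hC', PC, j, q, hPC, hsC⟩ := hC.exists_step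
  obtain ⟨e, he⟩ := h.extend (hC.perp PA (h𝓣 _ hPA) 0) i
  obtain ⟨B', k, r, f', g', hs, hs'⟩ := horseshoe h hsA hsC e he
  exact ⟨B', ⟨A', C', f', g', hs', hA', hC'⟩, _, k, r, projective_prod _ _, hs⟩

/-- If `P × M` is in the class with `P` projective, and `M` is in `Perp 𝓣`, then `M` is in the
class. For a step `0 → P × M → P₀ → Q → 0`, the cokernel of the restriction `M → P₀` is an extension
of `Q` by `P`, so it is in the class. This avoids closure under arbitrary direct summands. -/
lemma Cores.of_prod (h𝓣 : ∀ P : ModuleCat.{0} R, Projective P → P ∈ 𝓣)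
    (P : ModuleCat.{0} R) [Projective P] (hM : Perp 𝓣 M)
    (h : Cores 𝓣 (ModuleCat.of R (P × M))) : Cores 𝓣 M := by
  obtain ⟨Q, hQ, P₀, i, p, hP₀, hs⟩ := h.exists_step
  obtain ⟨i0, ip, p1⟩ := ses_iff.1 hs
  let k : M →ₗ[R] P₀ := i.hom ∘ₗ LinearMap.inr R P M
  let a : P →ₗ[R] P₀ ⧸ LinearMap.range k :=
    (LinearMap.range k).mkQ ∘ₗ i.hom ∘ₗ LinearMap.inl R P M
  let b : (P₀ ⧸ LinearMap.range k) →ₗ[R] Q := (LinearMap.range k).liftQ p.hom (by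
    rintro _ ⟨m, rfl⟩
    exact (ip _).2 ⟨_, rfl⟩)
  have hX : Cores 𝓣 (ModuleCat.of R (P₀ ⧸ LinearMap.range k)) := by
    refine Cores.of_ses (f := ModuleCat.ofHom a) (g := ModuleCat.ofHom b) h𝓣 ?_
      (Cores.of_projective P) hQ
    refine ses_iff.2 ⟨?_, ?_, ?_⟩
    · refine (injective_iff_map_eq_zero a).2 fun x hx => ?_
      obtain ⟨m, hm⟩ := (Submodule.Quotient.mk_eq_zero _).1 hx
      exact (Prod.ext_iff.1 (i0 hm)).1.symm
    · intro y
      obtain ⟨y, rfl⟩ := Submodule.mkQ_surjective _ y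
      constructor
      · intro hy
        obtain ⟨⟨x, m⟩, rfl⟩ := (ip y).1 hy
        refine ⟨x, ?_⟩
        change Submodule.Quotient.mk _ = Submodule.Quotient.mk _
        rw [Submodule.Quotient.eq]
        refine ⟨-m, ?_⟩
        change i.hom (0, -m) = i.hom (x, 0) - i.hom (x, m)
        rw [← map_sub]
        simp
      · rintro ⟨x, hx⟩
        rw [← hx]
        exact (ip _).2 ⟨_, rfl⟩
    · intro y
      obtain ⟨v, rfl⟩ := p1 y
      exact ⟨Submodule.Quotient.mk v, rfl⟩
  refine Cores.of_step hM hX ⟨P₀, ModuleCat.ofHom k, ModuleCat.ofHom (LinearMap.range k).mkQ,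
    hP₀, ses_iff.2 ⟨?_, ?_, Submodule.mkQ_surjective _⟩⟩
  · exact fun x y hxy => (Prod.ext_iff.1 (i0 hxy)).2
  · exact fun y => Submodule.Quotient.mk_eq_zero _

/-- If `0 → G₁ → G₀ → M → 0` is exact with both `Gᵢ` in the class and `Ext¹(M, 𝓣) = 0`, then `M`
is in the class. -/
lemma Cores.of_coker (h𝓣 : ∀ P : ModuleCat.{0} R, Projective P → P ∈ 𝓣) {G₁ G₀ : ModuleCat.{0} R}
    {f : G₁ ⟶ G₀} {g : G₀ ⟶ M} (h : SES f g) (h₁ : Cores 𝓣 G₁) (h₀ : Cores 𝓣 G₀)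
    (hM : ∀ T ∈ 𝓣, Subsingleton (Abelian.Ext M T 1)) : Cores 𝓣 M := by
  obtain ⟨G', hG', P, i, p, hP, hs⟩ := h₁.exists_step
  have hperp : Perp 𝓣 M := by
    intro T hT n
    cases n with
    | zero => exact hM T hT
    | succ n => exact h.ext_right (h₁.perp T hT n) (h₀.perp T hT (n + 1))
  obtain ⟨e, he⟩ := h.extend (hM P (h𝓣 P hP)) i
  obtain ⟨f0, fg, g1⟩ := ses_iff.1 h
  obtain ⟨i0, ip, p1⟩ := ses_iff.1 hs
  have he' : ∀ x, e (f x) = i x := fun x => by rw [← he]; rfl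
  -- It remains to see that `P × M` is in the class, by means of the short exact sequence
  -- `0 → G₀ → P × M → G' → 0` with maps `(e, g)` and `(x, g y) ↦ p (x - e y)`.
  refine Cores.of_prod h𝓣 P hperp ?_
  let eM := g.hom.quotKerEquivOfSurjective g1
  have hker : LinearMap.ker g.hom ≤ LinearMap.ker (p.hom ∘ₗ e.hom) := by
    intro x hx
    obtain ⟨a, rfl⟩ := (fg x).1 hx
    refine (ip _).2 ⟨a, (he' a).symm⟩
  let d : M →ₗ[R] G' := (LinearMap.ker g.hom).liftQ (p.hom ∘ₗ e.hom) hker ∘ₗ eM.symm.toLinearMap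
  have hd : ∀ y, d (g y) = p (e y) := by
    intro y
    have : eM.symm (g y) = Submodule.Quotient.mk y := by
      rw [LinearEquiv.symm_apply_eq]; rfl
    change (LinearMap.ker g.hom).liftQ _ hker (eM.symm (g y)) = _
    rw [this]
    rfl
  refine Cores.of_ses (f := ModuleCat.ofHom (e.hom.prod g.hom))
    (g := ModuleCat.ofHom (p.hom.coprod (-d))) h𝓣 (ses_iff.2 ⟨?_, ?_, ?_⟩) h₀ hG'
  · refine (injective_iff_map_eq_zero (e.hom.prod g.hom)).2 fun y hy => ?_
    obtain ⟨h1, h2⟩ := Prod.ext_iff.1 hy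
    obtain ⟨a, rfl⟩ := (fg y).1 h2
    have : a = 0 := i0 (((he' a).symm.trans h1).trans (map_zero i.hom).symm)
    rw [this]
    exact map_zero f.hom
  · rintro ⟨x, m⟩
    obtain ⟨y, rfl⟩ := g1 m
    have key : (p.hom.coprod (-d)) (x, g y) = p.hom (x - e y) := by
      rw [map_sub, LinearMap.coprod_apply, LinearMap.neg_apply, ← sub_eq_add_neg]
      exact congrArg (p.hom x - ·) (hd y)
    constructor
    · intro hx
      obtain ⟨a, ha⟩ := (ip _).1 (key.symm.trans hx)
      refine ⟨y + f a, Prod.ext ?_ ?_⟩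
      · change e.hom (y + f a) = x
        rw [map_add]
        change e y + e (f a) = x
        rw [he', ha]
        exact add_sub_cancel _ _
      · change g.hom (y + f a) = g y
        rw [map_add]
        change g y + g (f a) = g y
        rw [(fg _).2 ⟨a, rfl⟩, add_zero]
    · rintro ⟨z, hz⟩
      obtain ⟨h1, h2⟩ := Prod.ext_iff.1 hz
      change e z = x at h1
      change g z = g y at h2
      change (p.hom.coprod (-d)) (x, g y) = 0
      rw [← h1, ← h2, LinearMap.coprod_apply, LinearMap.neg_apply, hd]
      exact add_neg_cancel _
  · intro y
    obtain ⟨x, rfl⟩ := p1 y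
    refine ⟨(x, 0), ?_⟩
    change (p.hom.coprod (-d)) (x, 0) = p x
    simp

/-! ### Comparison with totally acyclic complexes -/

lemma Perp.of_iso (e : X ≅ Y) (h : Perp 𝓣 Y) : Perp 𝓣 X := fun T hT n => by
  have := h T hT n
  refine subsingleton_of_forall_eq 0 fun x => ?_
  have h1 : (Abelian.Ext.mk₀ e.hom).comp ((Abelian.Ext.mk₀ e.inv).comp x (zero_add _))
      (zero_add _) = x := by
    rw [Abelian.Ext.mk₀_comp_mk₀_assoc, e.hom_inv_id, Abelian.Ext.mk₀_id_comp]
  rw [← h1, Subsingleton.elim ((Abelian.Ext.mk₀ e.inv).comp x (zero_add _)) 0,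
    Abelian.Ext.comp_zero]

/-- The exact complex `K` breaks up into short exact sequences `0 → Zₙ → Kₙ → Zₙ₋₁ → 0`, where `Zₙ`
is the kernel of the differential leaving `Kₙ`. -/
lemma IsTotallyAcyclicWrt.exists_ses {K : ChainComplex (ModuleCat.{0} R) ℤ}
    (hK : IsTotallyAcyclicWrt 𝓣 K) (n : ℤ) :
    ∃ p : K.X n ⟶ kernel (K.d (n - 1) (n - 1 - 1)),
      SES (kernel.ι (K.d n (n - 1))) p ∧ p ≫ kernel.ι _ = K.d n (n - 1) := by
  have hex : (K.sc' n (n - 1) (n - 1 - 1)).Exact :=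
    (HomologicalComplex.exactAt_iff' K n (n - 1) (n - 1 - 1) (by simp) (by simp)).1 (hK.exact _)
  have hepi : Epi (kernel.lift (K.d (n - 1) (n - 1 - 1)) (K.d n (n - 1)) (K.d_comp_d _ _ _)) :=
    hex.epi_kernelLift
  refine ⟨_, ⟨?_, { exact := ?_, epi_g := hepi }⟩, kernel.lift_ι _ _ _⟩
  · rw [← cancel_mono (kernel.ι (K.d (n - 1) (n - 1 - 1)))]
    simp
  · refine ShortComplex.exact_of_f_is_kernel _ ?_
    exact isKernelOfComp _ _ (kernelIsKernel (K.d n (n - 1))) _ (kernel.lift_ι _ _ _)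

/-- `Hom(-, 𝓣)`-exactness gives `Ext¹(Zₙ, T) = 0` for all `n` at once; higher degrees follow by
dimension shifting along the complex. -/
lemma IsTotallyAcyclicWrt.perp_kernel {K : ChainComplex (ModuleCat.{0} R) ℤ}
    (hK : IsTotallyAcyclicWrt 𝓣 K) (n : ℤ) : Perp 𝓣 (kernel (K.d n (n - 1))) := by
  intro T hT k
  have hproj := hK.projective
  induction k generalizing n with
  | zero =>
    obtain ⟨m, rfl⟩ : ∃ m, n = m - 1 := ⟨n + 1, by simp⟩
    obtain ⟨m, rfl⟩ : ∃ k, m = k - 1 := ⟨m + 1, by simp⟩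
    obtain ⟨p, hp, hpd⟩ := hK.exists_ses m
    obtain ⟨q, hq, -⟩ := hK.exists_ses (m - 1)
    refine hq.ext_one_of_extend (Abelian.Ext.subsingleton_of_projective _ _ 0) fun a => ?_
    have : Epi p := (ModuleCat.epi_iff_surjective _).2 (ses_iff.1 hp).2.2
    obtain ⟨b, hb⟩ := hK.homExact T hT m (p ≫ a) (by
      have : K.d (m + 1) m ≫ p = 0 := by
        rw [← cancel_mono (kernel.ι _), Category.assoc, hpd]
        simp
      rw [← Category.assoc, this, zero_comp])
    refine ⟨b, ?_⟩
    rw [← cancel_epi p, ← hb, ← hpd, Category.assoc]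
  | succ k ih =>
    obtain ⟨m, rfl⟩ : ∃ m, n = m - 1 := ⟨n + 1, by simp⟩
    obtain ⟨p, hp, -⟩ := hK.exists_ses m
    exact hp.ext_right (ih m) (Abelian.Ext.subsingleton_of_projective _ _ _)

lemma Cores.of_isGProj (h : IsGProj 𝓣 M) : Cores 𝓣 M := by
  obtain ⟨K, hK, n, ⟨e⟩⟩ := h
  refine ⟨{X | ∃ n, Nonempty (X ≅ kernel (K.d n (n - 1)))}, ⟨n, ⟨e⟩⟩, ?_⟩
  rintro X ⟨n, ⟨e⟩⟩
  obtain ⟨p, hp, -⟩ := hK.exists_ses n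
  refine ⟨(hK.perp_kernel n).of_iso e, _, ⟨n - 1, ⟨Iso.refl _⟩⟩, K.X n, e.hom ≫ kernel.ι _, p,
    hK.projective n, ?_⟩
  obtain ⟨w, hS⟩ := hp
  have w' : (e.hom ≫ kernel.ι (K.d n (n - 1))) ≫ p = 0 := by simp [w]
  let φ : ShortComplex.mk _ _ w ≅ ShortComplex.mk _ _ w' :=
    ShortComplex.isoMk e.symm (Iso.refl _) (Iso.refl _) (by simp) (by simp)
  exact ⟨w', ShortComplex.shortExact_of_iso φ hS⟩

/-- A member of the class sits in a doubly infinite sequence of steps inside the class. -/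
lemma Cores.exists_seq (h : Cores 𝓣 M) :
    ∃ Z : ℤ → ModuleCat.{0} R, Z 0 = M ∧ ∀ n, Cores 𝓣 (Z n) ∧ Step (Z (n + 1)) (Z n) := by
  choose r hr hr' using fun X : {X // Cores 𝓣 X} => X.2.exists_step
  choose l hl hl' using fun X : {X // Cores 𝓣 X} => X.2.exists_step_left
  let ρ : {X // Cores 𝓣 X} → {X // Cores 𝓣 X} := fun X => ⟨r X, hr X⟩
  let lam : {X // Cores 𝓣 X} → {X // Cores 𝓣 X} := fun X => ⟨l X, hl X⟩
  let Z : ℤ → {X // Cores 𝓣 X} := fun n => match n with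
    | Int.ofNat k => lam^[k] ⟨M, h⟩
    | Int.negSucc k => ρ^[k + 1] ⟨M, h⟩
  refine ⟨fun n => (Z n).1, rfl, fun n => ⟨(Z n).2, ?_⟩⟩
  match n with
  | Int.ofNat k =>
    change Step (lam^[k + 1] ⟨M, h⟩).1 (lam^[k] ⟨M, h⟩).1
    rw [Function.iterate_succ_apply']
    exact hl' _
  | Int.negSucc 0 => exact hr' ⟨M, h⟩
  | Int.negSucc (k + 1) =>
    change Step (ρ^[k + 1] ⟨M, h⟩).1 (ρ^[k + 1 + 1] ⟨M, h⟩).1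
    rw [Function.iterate_succ_apply' ρ (k + 1)]
    exact hr' _

/-- Splicing a doubly infinite sequence of steps gives a totally acyclic complex. -/
lemma Cores.isGProj (h : Cores 𝓣 M) : IsGProj 𝓣 M := by
  obtain ⟨Z, rfl, hZ⟩ := h.exists_seq
  choose P i p hP hs using fun n => (hZ n).2
  have hw : ∀ n, i n ≫ p n = 0 := fun n => (hs n).1
  have hS : ∀ n, (ShortComplex.mk (i n) (p n) (hw n)).ShortExact := fun n => (hs n).2
  have hmono : ∀ n, Mono (i n) := fun n => (hS n).mono_f
  have hepi : ∀ n, Epi (p n) := fun n => (hS n).epi_g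
  let d : ∀ n, P (n + 1) ⟶ P n := fun n => p (n + 1) ≫ i n
  have hd : ∀ n, d (n + 1) ≫ d n = 0 := fun n => by
    simp only [d, Category.assoc]
    rw [← Category.assoc (i (n + 1)), hw, zero_comp, comp_zero]
  let K : ChainComplex (ModuleCat.{0} R) ℤ := ChainComplex.of P d hd
  have hKd : ∀ n, K.d (n + 1) n = p (n + 1) ≫ i n := fun n => ChainComplex.of_d P d n
  refine ⟨K, ⟨hP, fun n => ?_, fun T hT n g hg => ?_⟩, -1, ?_⟩
  · obtain ⟨n, rfl⟩ : ∃ m, n = m + 1 := ⟨n - 1, by simp⟩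
    refine (HomologicalComplex.exactAt_iff' K (n + 1 + 1) (n + 1) n (by simp) (by simp)).2 ?_
    refine (ShortComplex.moduleCat_exact_iff _).2 fun x hx => ?_
    change K.d (n + 1) n x = 0 at hx
    change ∃ y, K.d (n + 1 + 1) (n + 1) y = x
    rw [hKd] at hx ⊢
    have hx' : p (n + 1) x = 0 :=
      (ses_iff.1 (hs n)).1 (hx.trans (map_zero (i n).hom).symm)
    obtain ⟨z, rfl⟩ := ((ses_iff.1 (hs (n + 1))).2.1 x).1 hx'
    obtain ⟨y, rfl⟩ := (ses_iff.1 (hs (n + 1 + 1))).2.2 z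
    exact ⟨y, rfl⟩
  · obtain ⟨n, rfl⟩ : ∃ m, n = m + 1 := ⟨n - 1, by simp⟩
    rw [hKd, Category.assoc] at hg
    have hg' : i (n + 1) ≫ g = 0 := by
      rw [← cancel_epi (p (n + 1 + 1)), comp_zero]
      exact hg
    -- A cocycle `g` factors through `Z (n + 1)`, and the factor extends along
    -- `Z (n + 1) ⟶ P n` because `Ext¹(Z n, T) = 0`.
    obtain ⟨a, ha⟩ := CokernelCofork.IsColimit.desc' (hS (n + 1)).gIsCokernel g hg'
    obtain ⟨b, hb⟩ := (hs n).extend ((hZ n).1.perp T hT 0) a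
    suffices H : ∀ m, m = n → ∃ h : K.X m ⟶ T, K.d (n + 1) m ≫ h = g from H _ (by simp)
    rintro m rfl
    refine ⟨b, ?_⟩
    rw [hKd, Category.assoc]
    refine Eq.trans ?_ ha
    exact congrArg (p (m + 1) ≫ ·) hb
  · have H : ∀ n m : ℤ, n = m + 1 → Nonempty (Z (n + 1) ≅ kernel (K.d n m)) := by
      rintro _ m rfl
      exact ⟨(isKernelCompMono (hS (m + 1)).fIsKernel (i m) (hKd m)).conePointUniqueUpToIso
        (limit.isLimit _)⟩
    exact H (-1) (-1 - 1) (by simp)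

end Closure

theorem stmt1
    (R : Type) [Ring R] (𝓛 : Set (ModuleCat.{0} R)) (𝓐 : Set (ModuleCat.{0} Rᵐᵒᵖ))
    (hdp : CompleteDualityPair 𝓛 𝓐) (M G₀ G₁ : ModuleCat.{0} R) (f : G₁ ⟶ G₀) (g : G₀ ⟶ M)
    (hses : SES f g) (h₁ : IsGProj 𝓛 G₁) (h₀ : IsGProj 𝓛 G₀)
    (hext : ∀ L ∈ 𝓛, ExtVanish 1 M L) :
    IsGProj 𝓛 M :=
  (Cores.of_coker (fun P _ => hdp.mem_of_projective P) hses (Cores.of_isGProj h₁)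
    (Cores.of_isGProj h₀) fun L hL => (hext L hL).subsingleton_ext).isGProj

end DualityPaper
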